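/- arXiv:0807.3632 — 5 statements merged into one kernel-verified Lean document; each statement's English description precedes it below -/
import Mathlib

section
/- Let G = (V,E) be a finite connected undirected graph with positive symmetric edge weights ω, let h_{ij} denote the hitting time of the random walk on G, let R_{ij} denote the effective resistance between i and j, and let ω(k) and ω(G) be the total weight at vertex k and of the graph respectively. Then for all vertices i and j, h_{ij} = ω(G)·R_{ij} + (1/2)·Σ_{k∈V} ω(k)·(R_{jk} − R_{ik}). -/
open Finset

variable {V : Type*}

/-- The total weight incident to a vertex: `ω(i) = Σ_l ω(i,l)`. -/
noncomputable def vWeight [Fintype V] (w : V → V → ℝ) (i : V) : ℝ :=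
  ∑ l, w i l

/-- The total weight of the graph (each edge counted once): `ω(G)`. -/
noncomputable def gWeight [Fintype V] (w : V → V → ℝ) : ℝ :=
  (∑ i, ∑ l, w i l) / 2

/-- Transition probabilities of the random walk on the weighted graph:
from `i`, move to `l` with probability `ω(i,l)/ω(i)`. -/
noncomputable def walkStep [Fintype V] (w : V → V → ℝ) (i l : V) : ℝ :=
  w i l / vWeight w i

/-- `w` is a system of positive symmetric edge weights on a finite connected undirected
graph: symmetric, nonnegative, zero on the diagonal (and on non-edges), and the graph
whose edges are the pairs with positive weight is connected. -/
def IsWeight [Fintype V] (w : V → V → ℝ) : Prop :=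
  (∀ a b, w a b = w b a) ∧ (∀ a b, 0 ≤ w a b) ∧ (∀ a, w a a = 0) ∧
    (∀ a b, Relation.ReflTransGen (fun x y => 0 < w x y) a b)

/-- `hitSurv p j n i` is the probability that the Markov chain with transition kernel `p`
started at `i` has not visited `j` at any of the times `0, 1, …, n`. -/
noncomputable def hitSurv {S : Type*} [Fintype S] [DecidableEq S] (p : S → S → ℝ) (j : S) :
    ℕ → S → ℝ
  | 0 => fun i => if i = j then 0 else 1
  | n + 1 => fun i => if i = j then 0 else ∑ l, p i l * hitSurv p j n l

/-- Expected hitting time of `j` from `i`: the expected number of steps for the chain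
started at `i` to first reach `j`, computed as `Σ_n P(T_j > n)`. -/
noncomputable def hitTime {S : Type*} [Fintype S] [DecidableEq S] (p : S → S → ℝ)
    (i j : S) : ℝ :=
  ∑' n : ℕ, hitSurv p j n i

/-- A unit-current potential from `i` to `j`: Kirchhoff's equations when a unit current
enters at `i` and leaves at `j`. -/
def IsUnitPotential [Fintype V] (w : V → V → ℝ) (i j : V) (φ : V → ℝ) : Prop :=
  (∀ k, k ≠ i → k ≠ j → ∑ l, w k l * (φ k - φ l) = 0) ∧
    (∑ l, w i l * (φ i - φ l) = 1) ∧
    (∑ l, w j l * (φ j - φ l) = -1)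

/-- `R` is the effective-resistance matrix of the weighted graph `w`:
`R a a = 0`, and for `a ≠ b`, `R a b = V_a - V_b` for a unit-current potential
from `a` to `b`. -/
def IsResistance [Fintype V] (w : V → V → ℝ) (R : V → V → ℝ) : Prop :=
  (∀ a, R a a = 0) ∧
    ∀ a b, a ≠ b → ∃ φ, IsUnitPotential w a b φ ∧ R a b = φ a - φ b

/-- The weight function of an unweighted graph: weight `1` on edges, `0` elsewhere. -/
noncomputable def aw (G : SimpleGraph V) [DecidableRel G.Adj] (a b : V) : ℝ :=
  if G.Adj a b then 1 else 0

/-- Probability of a given trajectory: `trajProb p i xs` is the probability that the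
chain started at `i` successively visits the vertices of the list `xs`. -/
noncomputable def trajProb {S : Type*} [Fintype S] (p : S → S → ℝ) : S → List S → ℝ
  | _, [] => 1
  | i, x :: xs => p i x * trajProb p x xs

/-- Probability that the walk started at `i` has not visited every vertex by time `n`. -/
noncomputable def notCoveredProb [Fintype V] [DecidableEq V] (p : V → V → ℝ) (n : ℕ)
    (i : V) : ℝ :=
  ∑ xs : Fin n → V, trajProb p i (List.ofFn xs) *
    (if (i :: List.ofFn xs).toFinset = Finset.univ then 0 else 1)

/-- The cover time from `i`: the expected number of steps for the walk started at `i`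
to have visited every vertex, computed as `Σ_n P(T_cov > n)`. -/
noncomputable def coverTime [Fintype V] [DecidableEq V] (p : V → V → ℝ) (i : V) : ℝ :=
  ∑' n : ℕ, notCoveredProb p n i

/-- `visitSurv p j k n i` is the probability that the chain started at `i` is at `k` at
time `n` without having visited `j` at any of the times `0, …, n`. -/
noncomputable def visitSurv [Fintype V] [DecidableEq V] (p : V → V → ℝ) (j k : V) :
    ℕ → V → ℝ
  | 0 => fun i => if i = j then 0 else if i = k then 1 else 0
  | n + 1 => fun i => if i = j then 0 else ∑ l, p i l * visitSurv p j k n l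

/-- `expVisits p i j k` is the expected number of visits to `k` (counting time `0`) of
the chain started at `i` strictly before its first visit to `j`. -/
noncomputable def expVisits [Fintype V] [DecidableEq V] (p : V → V → ℝ) (i j k : V) : ℝ :=
  ∑' n : ℕ, visitSurv p j k n i

/-- `reachBeforeAux p i j n l` is the probability that the walk started at `l` reaches `j`
within `n` steps without visiting `i` first. -/
noncomputable def reachBeforeAux [Fintype V] [DecidableEq V] (p : V → V → ℝ) (i j : V) :
    ℕ → V → ℝ
  | 0 => fun l => if l = j then 1 else 0
  | n + 1 => fun l =>
      if l = j then 1 else if l = i then 0 else ∑ m, p l m * reachBeforeAux p i j n m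

/-- The probability that the walk started at `i` reaches `j` before returning to `i`:
one step from `i` to `l`, then reach `j` before `i` (monotone limit in `n`). -/
noncomputable def escapeProb [Fintype V] [DecidableEq V] (p : V → V → ℝ) (i j : V) : ℝ :=
  ∑ l, p i l * ⨆ n, reachBeforeAux p i j n l

/-- `hitSurvSet p F n x` is the probability that the chain started at `x` has not visited
the set `F` at any of the times `0, …, n`. -/
noncomputable def hitSurvSet {S : Type*} [Fintype S] (p : S → S → ℝ) (F : S → Prop)
    [DecidablePred F] : ℕ → S → ℝ
  | 0 => fun x => if F x then 0 else 1
  | n + 1 => fun x => if F x then 0 else ∑ y, p x y * hitSurvSet p F n y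

/-- Expected hitting time of the set `F` from `x`, computed as `Σ_n P(T_F > n)`. -/
noncomputable def hitTimeSet {S : Type*} [Fintype S] (p : S → S → ℝ) (F : S → Prop)
    [DecidablePred F] (x : S) : ℝ :=
  ∑' n : ℕ, hitSurvSet p F n x

/-- The associated chain `𝒢` on pairs `(P, i)` (visited set, current vertex): from
`(P, i)` it moves to `(P ∪ {j}, j)` with probability `ω(i,j)/ω(i)`. -/
noncomputable def pairStep [Fintype V] [DecidableEq V] (w : V → V → ℝ)
    (s t : Finset V × V) : ℝ :=
  if t.1 = insert t.2 s.1 then walkStep w s.2 t.2 else 0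

/-- `exitProbAux p P j n i` is the probability that the walk started at `i` leaves `P`
within `n` steps and that the first vertex visited outside `P` is `j`. -/
noncomputable def exitProbAux [Fintype V] [DecidableEq V] (p : V → V → ℝ) (P : Finset V)
    (j : V) : ℕ → V → ℝ
  | 0 => fun i => if i ∈ P then 0 else if i = j then 1 else 0
  | n + 1 => fun i =>
      if i ∈ P then ∑ l, p i l * exitProbAux p P j n l else if i = j then 1 else 0

/-- The probability that the first vertex outside `P` visited by the walk started at `i`
is `j` (monotone limit in the number of allowed steps). -/
noncomputable def exitProb [Fintype V] [DecidableEq V] (p : V → V → ℝ) (P : Finset V)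
    (i j : V) : ℝ :=
  ⨆ n, exitProbAux p P j n i

/-- The negated weighted Laplacian `Δ` of the weighted graph `w` on `Fin n`. -/
noncomputable def negLaplacian (n : ℕ) (w : Fin n → Fin n → ℝ) :
    Matrix (Fin n) (Fin n) ℝ :=
  Matrix.of fun k l => if k = l then -(∑ m, w k m) else w k l

/-- `Δ₂`: the negated weighted Laplacian with its first row replaced by the first row of
the identity matrix. -/
noncomputable def delta2 (n : ℕ) (hn : 0 < n) (w : Fin n → Fin n → ℝ) :
    Matrix (Fin n) (Fin n) ℝ :=
  (negLaplacian n w).updateRow ⟨0, hn⟩ (fun l => if l = ⟨0, hn⟩ then 1 else 0)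

/-- The weight function obtained from `w` by adding weight `u` on the edge `{a, b}`. -/
noncomputable def addEdge [DecidableEq V] (w : V → V → ℝ) (a b : V) (u : ℝ)
    (x y : V) : ℝ :=
  w x y + (if (x = a ∧ y = b) ∨ (x = b ∧ y = a) then u else 0)

/-- The weighted Laplacian, whose value at `k` is the net current leaving `k`. -/
noncomputable def netCurrent [Fintype V] (w : V → V → ℝ) (φ : V → ℝ) (k : V) : ℝ :=
  ∑ l, w k l * (φ k - φ l)

section Laplacian

variable [Fintype V] {w : V → V → ℝ}

lemma netCurrent_sub (w : V → V → ℝ) (φ ψ : V → ℝ) (k : V) :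
    netCurrent w (fun x => φ x - ψ x) k = netCurrent w φ k - netCurrent w ψ k := by
  simp only [netCurrent, ← sum_sub_distrib]
  exact sum_congr rfl fun l _ => by ring

lemma netCurrent_eq (w : V → V → ℝ) (φ : V → ℝ) (k : V) :
    netCurrent w φ k = vWeight w k * φ k - ∑ l, w k l * φ l := by
  simp only [netCurrent, vWeight, sum_mul, mul_sub, sum_sub_distrib]

lemma sum_mul_netCurrent_comm (hsymm : ∀ a b, w a b = w b a) (φ ψ : V → ℝ) :
    ∑ k, φ k * netCurrent w ψ k = ∑ k, ψ k * netCurrent w φ k := by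
  simp only [netCurrent_eq, mul_sub, sum_sub_distrib, mul_sum]
  congr 1
  · exact sum_congr rfl fun k _ => by ring
  · rw [sum_comm]
    exact sum_congr rfl fun k _ => sum_congr rfl fun l _ => by rw [hsymm l k]; ring

/-- Minimum principle: a function superharmonic off `j` and vanishing at `j` is nonnegative. -/
lemma nonneg_of_netCurrent_nonneg (hw : IsWeight w) {j : V} {u : V → ℝ} (huj : u j = 0)
    (hu : ∀ k, k ≠ j → 0 ≤ netCurrent w u k) (x : V) : 0 ≤ u x := by
  obtain ⟨-, hpos, -, hconn⟩ := hw
  obtain ⟨k, -, hk⟩ := exists_min_image univ u ⟨x, mem_univ x⟩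
  refine le_trans ?_ (hk x (mem_univ x))
  by_contra! hneg
  have hreach : ∀ y, Relation.ReflTransGen (fun x y => 0 < w x y) k y → u y = u k := by
    intro y hy
    induction hy with
    | refl => rfl
    | @tail a b _ hab ih =>
      have haj : a ≠ j := by
        rintro rfl
        linarith
      have hterm : ∀ l ∈ univ, w a l * (u a - u l) ≤ 0 := fun l _ =>
        mul_nonpos_of_nonneg_of_nonpos (hpos a l) (by linarith [hk l (mem_univ l)])
      have hsum : ∑ l, w a l * (u a - u l) = 0 :=
        le_antisymm (sum_nonpos hterm) (hu a haj)
      have hb := (sum_eq_zero_iff_of_nonpos hterm).1 hsum b (mem_univ b)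
      rcases mul_eq_zero.1 hb with h | h
      · exact absurd h hab.ne'
      · linarith
  linarith [hreach j (hconn k j)]

lemma eq_of_netCurrent_eq (hw : IsWeight w) {j : V} {u v : V → ℝ} (huv : u j = v j)
    (h : ∀ k, k ≠ j → netCurrent w u k = netCurrent w v k) (x : V) : u x = v x := by
  have h₁ := nonneg_of_netCurrent_nonneg hw (u := fun x => u x - v x) (sub_eq_zero.2 huv)
    (fun k hk => by rw [netCurrent_sub, h k hk, sub_self]) x
  have h₂ := nonneg_of_netCurrent_nonneg hw (u := fun x => v x - u x) (sub_eq_zero.2 huv.symm)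
    (fun k hk => by rw [netCurrent_sub, h k hk, sub_self]) x
  linarith

lemma vWeight_pos (hw : IsWeight w) {k j : V} (hkj : k ≠ j) : 0 < vWeight w k := by
  obtain ⟨-, hpos, -, hconn⟩ := hw
  rcases (hconn k j).cases_head with h | ⟨c, hc, -⟩
  · exact absurd h hkj
  · exact sum_pos' (fun l _ => hpos k l) ⟨c, mem_univ c, hc⟩

lemma netCurrent_eq_vWeight_iff (hw : IsWeight w) {k j : V} (hkj : k ≠ j) (u : V → ℝ) :
    netCurrent w u k = vWeight w k ↔ u k = 1 + ∑ l, walkStep w k l * u l := by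
  have hv := vWeight_pos hw hkj
  have hstep : ∑ l, walkStep w k l * u l = (∑ l, w k l * u l) / vWeight w k := by
    rw [sum_div]
    exact sum_congr rfl fun l _ => by rw [walkStep]; ring
  rw [netCurrent_eq, hstep]
  field_simp
  constructor <;> intro h <;> linarith

variable [DecidableEq V]

lemma IsUnitPotential.netCurrent_eq {a b : V} (hab : a ≠ b) {φ : V → ℝ}
    (hφ : IsUnitPotential w a b φ) (k : V) :
    netCurrent w φ k = (if k = a then 1 else 0) - (if k = b then 1 else 0) := by
  obtain ⟨h0, ha, hb⟩ := hφ
  by_cases hka : k = a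
  · subst hka
    simpa [netCurrent, hab] using ha
  by_cases hkb : k = b
  · subst hkb
    simpa [netCurrent, hka] using hb
  · simpa [netCurrent, hka, hkb] using h0 k hka hkb

/-- Every potential with unit source at `a` and unit sink at `b` has drop `R a b`. -/
lemma IsResistance.eq_sub (hw : IsWeight w) {R : V → V → ℝ} (hR : IsResistance w R) {a b : V}
    {ψ : V → ℝ}
    (hψ : ∀ k, netCurrent w ψ k = (if k = a then 1 else 0) - (if k = b then 1 else 0)) :
    R a b = ψ a - ψ b := by
  rcases eq_or_ne a b with rfl | hab
  · simp [hR.1]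
  obtain ⟨φ, hφ, hRφ⟩ := hR.2 a b hab
  have h := sum_mul_netCurrent_comm hw.1 φ ψ
  simp only [hφ.netCurrent_eq hab, hψ, mul_sub, sum_sub_distrib, mul_ite, mul_one, mul_zero, sum_ite_eq', mem_univ,
    if_true] at h
  rw [hRφ, h]

/-- Existence of potentials vanishing at the sink. -/
lemma IsResistance.exists_potential {R : V → V → ℝ} (hR : IsResistance w R) (a b : V) :
    ∃ ψ : V → ℝ, ψ b = 0 ∧
      ∀ k, netCurrent w ψ k = (if k = a then 1 else 0) - (if k = b then 1 else 0) := by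
  rcases eq_or_ne a b with rfl | hab
  · exact ⟨fun _ => 0, rfl, fun k => by simp [netCurrent]⟩
  obtain ⟨φ, hφ, -⟩ := hR.2 a b hab
  refine ⟨fun x => φ x - φ b, sub_self _, fun k => ?_⟩
  rw [← hφ.netCurrent_eq hab]
  simp only [netCurrent, sub_sub_sub_cancel_right]

end Laplacian

section HittingTime

variable {S : Type*} [Fintype S] [DecidableEq S] {p : S → S → ℝ} {j : S}

lemma hitSurv_nonneg (hp : ∀ a b, 0 ≤ p a b) (n : ℕ) (i : S) : 0 ≤ hitSurv p j n i := by
  induction n generalizing i with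
  | zero =>
    simp only [hitSurv]
    split_ifs <;> norm_num
  | succ n ih =>
    simp only [hitSurv]
    split_ifs
    · exact le_rfl
    · exact sum_nonneg fun l _ => mul_nonneg (hp i l) (ih l)

lemma hitSurv_self (n : ℕ) : hitSurv p j n j = 0 := by
  cases n <;> simp [hitSurv]

lemma hitTime_self : hitTime p j j = 0 := by
  simp [hitTime, hitSurv_self]

/-- A nonnegative solution of the one-step equations dominates the truncated hitting times. -/
lemma sum_range_hitSurv_le (hp : ∀ a b, 0 ≤ p a b) {f : S → ℝ} (hf : ∀ i, 0 ≤ f i)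
    (hstep : ∀ i, i ≠ j → f i = 1 + ∑ l, p i l * f l) (n : ℕ) (i : S) :
    ∑ m ∈ range n, hitSurv p j m i ≤ f i := by
  induction n generalizing i with
  | zero => simpa using hf i
  | succ n ih =>
    by_cases hij : i = j
    · subst hij
      simpa [hitSurv_self] using hf i
    · rw [sum_range_succ', hstep i hij]
      simp only [hitSurv, if_neg hij]
      rw [sum_comm, add_comm]
      gcongr with l
      rw [← mul_sum]
      exact mul_le_mul_of_nonneg_left (ih l) (hp i l)

lemma hitTime_eq_one_add (hsum : ∀ i, Summable fun n => hitSurv p j n i) {i : S} (hij : i ≠ j) :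
    hitTime p i j = 1 + ∑ l, p i l * hitTime p l j := by
  rw [hitTime, (hsum i).tsum_eq_zero_add]
  simp only [hitSurv, if_neg hij, hitTime, ← tsum_mul_left]
  rw [Summable.tsum_finsetSum fun l _ => (hsum l).mul_left _]

end HittingTime

/-- A function vanishing at `j` that satisfies the one-step equations off `j` is the expected
hitting time of `j`. -/
lemma hitTime_walkStep_eq [Fintype V] [DecidableEq V] {w : V → V → ℝ} (hw : IsWeight w) {j : V}
    {f : V → ℝ} (hfj : f j = 0) (hf : ∀ k, k ≠ j → netCurrent w f k = vWeight w k) (i : V) :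
    hitTime (walkStep w) i j = f i := by
  have hv : ∀ k, 0 ≤ vWeight w k := fun k => sum_nonneg fun l _ => hw.2.1 k l
  have hp : ∀ a b, 0 ≤ walkStep w a b := fun a b => div_nonneg (hw.2.1 a b) (hv a)
  have hf0 : ∀ k, 0 ≤ f k :=
    nonneg_of_netCurrent_nonneg hw hfj fun k hk => (hv k).trans_eq (hf k hk).symm
  have hsum : ∀ k, Summable fun n => hitSurv (walkStep w) j n k := fun k =>
    summable_of_sum_range_le (fun n => hitSurv_nonneg hp n k) fun n =>
      sum_range_hitSurv_le hp hf0
        (fun k hk => (netCurrent_eq_vWeight_iff hw hk f).1 (hf k hk)) n k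
  refine eq_of_netCurrent_eq (u := fun k => hitTime (walkStep w) k j) hw
    (hitTime_self.trans hfj.symm) (fun k hk => ?_) i
  rw [hf k hk]
  exact (netCurrent_eq_vWeight_iff hw hk _).2 (hitTime_eq_one_add hsum hk)

/-- For a finite connected positively weighted graph,
`h_{ij} = ω(G)·R_{ij} + (1/2)·Σ_k ω(k)·(R_{jk} − R_{ik})`. -/
theorem hitting_time_resistance_formula
    {V : Type*} [Fintype V] [DecidableEq V] (w : V → V → ℝ) (hw : IsWeight w)
    (R : V → V → ℝ) (hR : IsResistance w R) (i j : V) :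
    hitTime (walkStep w) i j =
      gWeight w * R i j + (1 / 2) * ∑ k, vWeight w k * (R j k - R i k) := by
  choose g hgj hg using fun m => hR.exists_potential m j
  have hsymm : ∀ a b, g a b = g b a := by
    intro a b
    have h := sum_mul_netCurrent_comm hw.1 (g a) (g b)
    simpa [hg, hgj, mul_sub] using h
  have hRij : R i j = g i i := by
    rw [hR.eq_sub hw (hg i), hgj, sub_zero]
  have hRj : ∀ m, R j m = g m m := by
    intro m
    rw [hR.eq_sub hw (ψ := fun x => 0 - g m x)
      (fun k => by rw [netCurrent_sub, hg]; simp [netCurrent])]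
    simp [hgj]
  have hRi : ∀ m, R i m = g i i + g m m - 2 * g m i := by
    intro m
    rw [hR.eq_sub hw (ψ := fun x => g i x - g m x)
      (fun k => by rw [netCurrent_sub, hg, hg]; ring), hsymm i m]
    ring
  have hf : ∀ k, k ≠ j →
      netCurrent w (fun x => ∑ m, vWeight w m * g m x) k = vWeight w k := by
    intro k hk
    have hlin : netCurrent w (fun x => ∑ m, vWeight w m * g m x) k =
        ∑ m, vWeight w m * netCurrent w (g m) k := by
      simp only [netCurrent, ← sum_sub_distrib, mul_sum]
      rw [sum_comm]
      exact sum_congr rfl fun m _ => sum_congr rfl fun l _ => by ring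
    simp [hlin, hg, hk]
  rw [hitTime_walkStep_eq hw (by simp [hgj]) hf i, hRij]
  have hG : gWeight w = (1 / 2) * ∑ k, vWeight w k := by
    simp only [gWeight, vWeight]
    ring
  rw [hG, mul_assoc, ← mul_add, sum_mul, ← sum_add_distrib, mul_sum]
  exact sum_congr rfl fun m _ => by
    rw [hRj, hRi]
    ring
end

section
/- Let G = (V,E) be a finite connected undirected graph with positive symmetric edge weights ω, and let i, j, k be three distinct vertices. Let V^{ij} denote the unit-current potential from i to j normalized so that V^{ij}_i = 0, and V^{ik} the unit-current potential from i to k normalized so that V^{ik}_i = 0. Then V^{ik}_j = V^{ij}_k (reciprocity of potentials). -/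
open Finset

variable {V : Type*}

/-- Green's identity: the Laplacian of a symmetric weight is self-adjoint. -/
theorem sum_mul_laplacian_comm {V : Type*} [Fintype V] {w : V → V → ℝ}
    (hw : ∀ a b, w a b = w b a) (φ ψ : V → ℝ) :
    ∑ x, ψ x * ∑ l, w x l * (φ x - φ l) = ∑ x, φ x * ∑ l, w x l * (ψ x - ψ l) := by
  rw [← sub_eq_zero, ← Finset.sum_sub_distrib]
  have expand : ∀ x, ψ x * ∑ l, w x l * (φ x - φ l) - φ x * ∑ l, w x l * (ψ x - ψ l)
      = ∑ l, w x l * (φ x * ψ l) - ∑ l, w l x * (φ l * ψ x) := by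
    intro x
    simp only [Finset.mul_sum, ← Finset.sum_sub_distrib]
    refine Finset.sum_congr rfl fun l _ => ?_
    rw [hw l x]
    ring
  rw [Finset.sum_congr rfl fun x _ => expand x, Finset.sum_sub_distrib,
    Finset.sum_comm (f := fun x l => w l x * (φ l * ψ x)), sub_self]

/-- Pairing a function with the Laplacian of a unit-current potential evaluates it at the
source minus at the sink. -/
theorem IsUnitPotential.sum_mul_laplacian {V : Type*} [Fintype V] {w : V → V → ℝ}
    {a b : V} {φ : V → ℝ} (hφ : IsUnitPotential w a b φ) (hab : a ≠ b) (ψ : V → ℝ) :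
    ∑ x, ψ x * ∑ l, w x l * (φ x - φ l) = ψ a - ψ b := by
  obtain ⟨harmonic, source, sink⟩ := hφ
  rw [Fintype.sum_eq_add a b hab fun x hx => by rw [harmonic x hx.1 hx.2, mul_zero],
    source, sink]
  ring

/-- Reciprocity of potentials: with potentials normalized to vanish
at `i`, one has `V^{ik}_j = V^{ij}_k`. -/
theorem potential_reciprocity
    {V : Type*} [Fintype V] [DecidableEq V] (w : V → V → ℝ) (hw : IsWeight w)
    (i j k : V) (hij : i ≠ j) (hik : i ≠ k) (hjk : j ≠ k)
    (φij : V → ℝ) (hφij : IsUnitPotential w i j φij) (hφij0 : φij i = 0)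
    (φik : V → ℝ) (hφik : IsUnitPotential w i k φik) (hφik0 : φik i = 0) :
    φik j = φij k := by
  have green := sum_mul_laplacian_comm hw.1 φij φik
  rw [hφij.sum_mul_laplacian hij, hφik.sum_mul_laplacian hik, hφij0, hφik0] at green
  linarith
end

section
/- Let G be a finite connected undirected graph on vertex set {1,…,n} with positive symmetric edge weights ω. Let Δ be the n×n matrix with Δ(k,l) = ω(k,l) for k ≠ l (with ω(k,l) = 0 when k and l are not adjacent) and Δ(k,k) = −Σ_{l∈N(k)} ω(k,l), and let Δ₂ be the matrix obtained from Δ by replacing its first row with the first row of the identity matrix. Then Δ₂ is invertible. -/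
open Finset

variable {V : Type*}

/-- Maximum principle: a function harmonic away from a vertex `z` of a connected weighted
graph attains its maximum at `z`. -/
theorem IsWeight.le_of_harmonic [Fintype V] {w : V → V → ℝ} (hw : IsWeight w) {z : V}
    {v : V → ℝ} (hv : ∀ k, k ≠ z → ∑ l, w k l * (v l - v k) = 0) (a : V) : v a ≤ v z := by
  obtain ⟨-, hnonneg, -, hconn⟩ := hw
  have : Nonempty V := ⟨z⟩
  obtain ⟨m, hm⟩ := Finite.exists_max v
  have hmax : ∀ x, Relation.ReflTransGen (fun x y => 0 < w x y) x z → v x = v m →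
      v z = v m := by
    intro x hx
    induction hx using Relation.ReflTransGen.head_induction_on with
    | refl => exact id
    | @head x y hxy _ ih =>
      intro hxm
      by_cases hxz : x = z
      · rw [← hxz, hxm]
      · refine ih ?_
        have hterm := (Finset.sum_eq_zero_iff_of_nonpos fun l _ =>
          mul_nonpos_of_nonneg_of_nonpos (hnonneg x l)
            (sub_nonpos.2 (hxm ▸ hm l))).1 (hv x hxz) y (Finset.mem_univ y)
        have := (mul_eq_zero.1 hterm).resolve_left hxy.ne'
        linarith
  exact (hm a).trans_eq (hmax m (hconn m z) rfl).symm

theorem negLaplacian_mulVec {n : ℕ} {w : Fin n → Fin n → ℝ} (hdiag : ∀ a, w a a = 0)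
    (v : Fin n → ℝ) (k : Fin n) :
    (negLaplacian n w).mulVec v k = ∑ l, w k l * (v l - v k) := by
  have hentry : ∀ l, negLaplacian n w k l * v l =
      w k l * v l - if k = l then (∑ m, w k m) * v k else 0 := by
    intro l
    by_cases h : k = l
    · subst h
      simp [negLaplacian, hdiag]
    · simp [negLaplacian, h]
  simp only [Matrix.mulVec, dotProduct, hentry, mul_sub, Finset.sum_sub_distrib,
    Finset.sum_ite_eq, Finset.mem_univ, if_true, Finset.sum_mul]

/-- For a connected weighted graph on `{1,…,n}`, the matrix `Δ₂`
(the negated weighted Laplacian with its first row replaced by the first row of the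
identity) is invertible. -/
theorem delta2_invertible (n : ℕ) (hn : 0 < n) (w : Fin n → Fin n → ℝ)
    (hw : IsWeight w) :
    IsUnit (delta2 n hn w) := by
  refine Matrix.mulVec_injective_iff_isUnit.1
    ((injective_iff_map_eq_zero (delta2 n hn w).mulVecLin).2 fun v hv => ?_)
  have hrow : ∀ k, (delta2 n hn w).mulVec v k = 0 := fun k => congrFun hv k
  have hzero : v ⟨0, hn⟩ = 0 := by
    simpa [delta2, Matrix.mulVec, dotProduct] using hrow ⟨0, hn⟩
  have hharm : ∀ k, k ≠ ⟨0, hn⟩ → ∑ l, w k l * (v l - v k) = 0 := by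
    intro k hk
    rw [← negLaplacian_mulVec hw.2.2.1]
    simpa [delta2, Matrix.mulVec, Matrix.updateRow_ne hk] using hrow k
  have hharm_neg : ∀ k, k ≠ ⟨0, hn⟩ → ∑ l, w k l * ((-v) l - (-v) k) = 0 := by
    intro k hk
    rw [← neg_eq_zero, ← hharm k hk, ← Finset.sum_neg_distrib]
    refine Finset.sum_congr rfl fun l _ => ?_
    simp only [Pi.neg_apply]
    ring
  funext k
  have hle := hw.le_of_harmonic hharm k
  have hge := hw.le_of_harmonic hharm_neg k
  simp only [Pi.neg_apply, Pi.zero_apply] at hge ⊢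
  linarith
end

section
/- Let G be a finite connected undirected graph on vertex set {1,…,n} with positive symmetric edge weights ω, let Δ be the negated weighted Laplacian of G and Δ₂ the matrix obtained from Δ by replacing its first row with the first row of the identity. Then for all vertices i and j, the effective resistance satisfies R_{ij} = Δ₂⁻¹(i,j) − Δ₂⁻¹(j,j) − Δ₂⁻¹(i,i) + Δ₂⁻¹(j,i). -/
open Finset

variable {V : Type*}

/-- The negated Laplacian acts by `(Δ x)_k = Σ_l ω(k,l) (x_l - x_k)`. -/
theorem negLaplacian_mulVec_apply {n : ℕ} {w : Fin n → Fin n → ℝ} (hdiag : ∀ a, w a a = 0)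
    (x : Fin n → ℝ) (k : Fin n) :
    (negLaplacian n w).mulVec x k = -∑ l, w k l * (x k - x l) := by
  have hentry : ∀ l, (if k = l then -(∑ m, w k m) else w k l) * x l
      = w k l * x l - if k = l then (∑ m, w k m) * x l else 0 := by
    intro l
    split_ifs with h
    · subst h
      rw [hdiag]
      ring
    · ring
  simp only [Matrix.mulVec, dotProduct, negLaplacian, Matrix.of_apply, hentry,
    Finset.sum_sub_distrib, Finset.sum_ite_eq, Finset.mem_univ, if_true, mul_sub,
    Finset.sum_mul]
  ring

theorem delta2_mulVec_zero {n : ℕ} (hn : 0 < n) (w : Fin n → Fin n → ℝ) (x : Fin n → ℝ) :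
    (delta2 n hn w).mulVec x ⟨0, hn⟩ = x ⟨0, hn⟩ := by
  simp [delta2, Matrix.mulVec, dotProduct]

theorem delta2_mulVec_of_ne {n : ℕ} (hn : 0 < n) {w : Fin n → Fin n → ℝ}
    (hdiag : ∀ a, w a a = 0) (x : Fin n → ℝ) {k : Fin n} (hk : k ≠ ⟨0, hn⟩) :
    (delta2 n hn w).mulVec x k = -∑ l, w k l * (x k - x l) := by
  rw [← negLaplacian_mulVec_apply hdiag]
  simp [delta2, Matrix.mulVec, Matrix.updateRow_ne hk]

/-- The Dirichlet energy identity for symmetric weights. -/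
theorem sum_mul_laplacian_eq_energy {V : Type*} [Fintype V] {w : V → V → ℝ}
    (hsymm : ∀ a b, w a b = w b a) (x : V → ℝ) :
    2 * ∑ k, x k * ∑ l, w k l * (x k - x l) = ∑ k, ∑ l, w k l * (x k - x l) ^ 2 := by
  have hswap : ∑ k, x k * ∑ l, w k l * (x k - x l)
      = ∑ k, ∑ l, x l * (w k l * (x l - x k)) := by
    simp only [Finset.mul_sum]
    rw [Finset.sum_comm]
    refine Finset.sum_congr rfl fun k _ => Finset.sum_congr rfl fun l _ => ?_
    rw [hsymm]
  rw [two_mul]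
  nth_rewrite 2 [hswap]
  simp only [Finset.mul_sum, ← Finset.sum_add_distrib]
  refine Finset.sum_congr rfl fun k _ => Finset.sum_congr rfl fun l _ => ?_
  ring

/-- A function of zero Dirichlet energy on a connected weighted graph is constant. -/
theorem IsWeight.eq_of_energy_eq_zero {V : Type*} [Fintype V] {w : V → V → ℝ} (hw : IsWeight w)
    {x : V → ℝ} (hx : ∑ k, ∑ l, w k l * (x k - x l) ^ 2 = 0) (a b : V) : x a = x b := by
  obtain ⟨-, hnonneg, -, hconn⟩ := hw
  have hterm : ∀ k l, 0 ≤ w k l * (x k - x l) ^ 2 := fun k l =>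
    mul_nonneg (hnonneg k l) (sq_nonneg _)
  have hedge : ∀ k l, 0 < w k l → x k = x l := by
    intro k l hkl
    have hrow := (Finset.sum_eq_zero_iff_of_nonneg
      fun k _ => Finset.sum_nonneg fun l _ => hterm k l).1 hx k (Finset.mem_univ k)
    have hentry := (Finset.sum_eq_zero_iff_of_nonneg fun l _ => hterm k l).1 hrow l
      (Finset.mem_univ l)
    exact sub_eq_zero.1 (pow_eq_zero_iff two_ne_zero |>.1
      ((mul_eq_zero.1 hentry).resolve_left hkl.ne'))
  induction hconn a b with
  | refl => rfl
  | tail _ hbc ih => exact ih.trans (hedge _ _ hbc)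

theorem isUnit_det_delta2 {n : ℕ} (hn : 0 < n) {w : Fin n → Fin n → ℝ} (hw : IsWeight w) :
    IsUnit (delta2 n hn w).det := by
  rw [isUnit_iff_ne_zero]
  intro hdet
  obtain ⟨x, hx, hmul⟩ := Matrix.exists_mulVec_eq_zero_iff.2 hdet
  have hroot : x ⟨0, hn⟩ = 0 := by rw [← delta2_mulVec_zero hn w x, hmul, Pi.zero_apply]
  have henergy : ∑ k, ∑ l, w k l * (x k - x l) ^ 2 = 0 := by
    rw [← sum_mul_laplacian_eq_energy hw.1, Finset.sum_eq_zero, mul_zero]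
    intro k _
    by_cases hk : k = ⟨0, hn⟩
    · rw [hk, hroot, zero_mul]
    · have := delta2_mulVec_of_ne hn hw.2.2.1 x hk
      rw [hmul, Pi.zero_apply, zero_eq_neg] at this
      rw [this, mul_zero]
  exact hx (funext fun k => (hw.eq_of_energy_eq_zero henergy k ⟨0, hn⟩).trans hroot)

/-- A unit-current potential `φ` from `i` to `j` satisfies
`Δ₂ (φ - c) = e_j - e_i` for a suitable constant `c`. -/
theorem IsUnitPotential.exists_delta2_mulVec_sub_const {n : ℕ} (hn : 0 < n)
    {w : Fin n → Fin n → ℝ} (hdiag : ∀ a, w a a = 0) {i j : Fin n} (hij : i ≠ j)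
    {φ : Fin n → ℝ} (hφ : IsUnitPotential w i j φ) :
    ∃ c : ℝ, (delta2 n hn w).mulVec (fun k => φ k - c) = Pi.single j 1 - Pi.single i 1 := by
  obtain ⟨hother, hi, hj⟩ := hφ
  refine ⟨φ ⟨0, hn⟩ - (Pi.single j 1 - Pi.single i 1 : Fin n → ℝ) ⟨0, hn⟩, funext fun k => ?_⟩
  by_cases hk : k = ⟨0, hn⟩
  · subst hk
    rw [delta2_mulVec_zero]
    ring
  · rw [delta2_mulVec_of_ne hn hdiag _ hk]
    simp only [sub_sub_sub_cancel_right]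
    by_cases hki : k = i
    · subst hki
      simp [hi, hij]
    by_cases hkj : k = j
    · subst hkj
      simp [hj, hki]
    · simp [hother k hki hkj, hki, hkj]

/-- The effective resistance is given by the entries of `Δ₂⁻¹`:
`R_{ij} = Δ₂⁻¹(i,j) − Δ₂⁻¹(j,j) − Δ₂⁻¹(i,i) + Δ₂⁻¹(j,i)`. -/
theorem resistance_from_delta2_inverse (n : ℕ) (hn : 0 < n) (w : Fin n → Fin n → ℝ)
    (hw : IsWeight w) (R : Fin n → Fin n → ℝ) (hR : IsResistance w R) (i j : Fin n) :
    R i j = (delta2 n hn w)⁻¹ i j - (delta2 n hn w)⁻¹ j j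
      - (delta2 n hn w)⁻¹ i i + (delta2 n hn w)⁻¹ j i := by
  by_cases hij : i = j
  · subst hij
    rw [hR.1]
    ring
  obtain ⟨φ, hφ, hRφ⟩ := hR.2 i j hij
  obtain ⟨c, hc⟩ := hφ.exists_delta2_mulVec_sub_const hn hw.2.2.1 hij
  have hsolve : ∀ k, φ k - c = (delta2 n hn w)⁻¹ k j - (delta2 n hn w)⁻¹ k i := by
    intro k
    have := congrArg (fun v => (delta2 n hn w)⁻¹.mulVec v k) hc
    simpa [Matrix.mulVec_mulVec, Matrix.nonsing_inv_mul _ (isUnit_det_delta2 hn hw),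
      Matrix.mulVec_sub] using this
  rw [hRφ]
  linarith [hsolve i, hsolve j]
end

section
/- Let G = (V,E) be a finite connected undirected graph with positive symmetric edge weights ω, and let G' be the weighted graph obtained from G by adding a new edge {a,b} of weight w > 0 (or by increasing the weight of an existing edge {a,b} by w). Then for all vertices i and j, the effective resistance in G' is at most that in G: R'_{ij} ≤ R_{ij} (Rayleigh monotonicity). -/
open Finset

variable {V : Type*}

/-- The Dirichlet form of the weight function `w`: each ordered pair of vertices contributes
half of its energy. -/
noncomputable def dirichletForm [Fintype V] (w : V → V → ℝ) (f g : V → ℝ) : ℝ :=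
  (∑ k, ∑ l, w k l * ((f k - f l) * (g k - g l))) / 2

/-- Summation by parts for the weighted Laplacian. -/
theorem sum_mul_laplacian_eq_dirichletForm [Fintype V] {w : V → V → ℝ}
    (hw : ∀ x y, w x y = w y x) (f g : V → ℝ) :
    ∑ k, g k * ∑ l, w k l * (f k - f l) = dirichletForm w f g := by
  have hswap : ∑ k, ∑ l, w k l * (f k - f l) * g l =
      -∑ k, ∑ l, w k l * (f k - f l) * g k := by
    rw [Finset.sum_comm, ← Finset.sum_neg_distrib]
    refine Finset.sum_congr rfl fun k _ => ?_
    rw [← Finset.sum_neg_distrib]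
    refine Finset.sum_congr rfl fun l _ => ?_
    rw [hw l k]
    ring
  have hsplit : ∑ k, ∑ l, w k l * ((f k - f l) * (g k - g l)) =
      ∑ k, ∑ l, w k l * (f k - f l) * g k - ∑ k, ∑ l, w k l * (f k - f l) * g l := by
    simp only [← Finset.sum_sub_distrib]
    refine Finset.sum_congr rfl fun k _ => Finset.sum_congr rfl fun l _ => ?_
    ring
  have hleft : ∑ k, g k * ∑ l, w k l * (f k - f l) =
      ∑ k, ∑ l, w k l * (f k - f l) * g k := by
    simp only [← Finset.sum_mul, mul_comm (g _)]
  rw [dirichletForm, hsplit, hswap, hleft]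
  ring

/-- A unit-current potential from `i` to `j` represents `g ↦ g i - g j` in the Dirichlet form. -/
theorem IsUnitPotential.dirichletForm_eq [Fintype V] {w : V → V → ℝ}
    (hw : ∀ x y, w x y = w y x) {i j : V} (hij : i ≠ j) {φ : V → ℝ}
    (hφ : IsUnitPotential w i j φ) (g : V → ℝ) :
    dirichletForm w φ g = g i - g j := by
  classical
  obtain ⟨h0, hi, hj⟩ := hφ
  rw [← sum_mul_laplacian_eq_dirichletForm hw,
    Fintype.sum_eq_add i j hij fun k hk => by rw [h0 k hk.1 hk.2, mul_zero], hi, hj]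
  ring

theorem dirichletForm_sub_self [Fintype V] (w : V → V → ℝ) (f g : V → ℝ) :
    dirichletForm w (f - g) (f - g) =
      dirichletForm w f f - 2 * dirichletForm w f g + dirichletForm w g g := by
  have h : ∑ k, ∑ l, w k l * (((f - g) k - (f - g) l) * ((f - g) k - (f - g) l)) =
      ∑ k, ∑ l, w k l * ((f k - f l) * (f k - f l)) -
        2 * ∑ k, ∑ l, w k l * ((f k - f l) * (g k - g l)) +
        ∑ k, ∑ l, w k l * ((g k - g l) * (g k - g l)) := by
    simp only [Finset.mul_sum, ← Finset.sum_sub_distrib, ← Finset.sum_add_distrib]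
    refine Finset.sum_congr rfl fun k _ => Finset.sum_congr rfl fun l _ => ?_
    simp only [Pi.sub_apply]
    ring
  simp only [dirichletForm, h]
  ring

theorem dirichletForm_self_nonneg [Fintype V] {w : V → V → ℝ} (hw : ∀ x y, 0 ≤ w x y)
    (f : V → ℝ) : 0 ≤ dirichletForm w f f :=
  div_nonneg (Finset.sum_nonneg fun k _ => Finset.sum_nonneg fun l _ =>
    mul_nonneg (hw k l) (mul_self_nonneg _)) zero_le_two

theorem dirichletForm_self_mono [Fintype V] {w w' : V → V → ℝ} (h : ∀ x y, w x y ≤ w' x y)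
    (f : V → ℝ) : dirichletForm w f f ≤ dirichletForm w' f f :=
  div_le_div_of_nonneg_right (Finset.sum_le_sum fun k _ => Finset.sum_le_sum fun l _ =>
    mul_le_mul_of_nonneg_right (h k l) (mul_self_nonneg _)) zero_le_two

/-- Potential drops under a unit current decrease when the weights increase. -/
theorem IsUnitPotential.drop_antitone [Fintype V] {w w' : V → V → ℝ}
    (hw : ∀ x y, w x y = w y x) (hw' : ∀ x y, w' x y = w' y x) (hnonneg : ∀ x y, 0 ≤ w x y)
    (hle : ∀ x y, w x y ≤ w' x y) {i j : V} (hij : i ≠ j) {φ ψ : V → ℝ}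
    (hφ : IsUnitPotential w i j φ) (hψ : IsUnitPotential w' i j ψ) :
    ψ i - ψ j ≤ φ i - φ j := by
  have h := dirichletForm_self_nonneg hnonneg (φ - ψ)
  rw [dirichletForm_sub_self, hφ.dirichletForm_eq hw hij, hφ.dirichletForm_eq hw hij] at h
  have hmono := dirichletForm_self_mono hle ψ
  rw [hψ.dirichletForm_eq hw' hij] at hmono
  linarith

theorem addEdge_symm [DecidableEq V] {w : V → V → ℝ} (hw : ∀ x y, w x y = w y x)
    (a b : V) (u : ℝ) (x y : V) : addEdge w a b u x y = addEdge w a b u y x := by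
  simp only [addEdge, hw x y, and_comm, or_comm]

theorem le_addEdge [DecidableEq V] (w : V → V → ℝ) (a b : V) {u : ℝ} (hu : 0 ≤ u)
    (x y : V) : w x y ≤ addEdge w a b u x y := by
  unfold addEdge
  split_ifs <;> linarith

/-- Rayleigh monotonicity: adding an edge `{a,b}` of weight `u > 0`
(or increasing the weight of an existing edge by `u`) can only decrease the effective
resistance: `R'_{ij} ≤ R_{ij}` for all `i, j`. -/
theorem rayleigh_monotonicity
    {V : Type*} [Fintype V] [DecidableEq V] (w : V → V → ℝ) (hw : IsWeight w)
    (a b : V) (hab : a ≠ b) (u : ℝ) (hu : 0 < u)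
    (R : V → V → ℝ) (hR : IsResistance w R)
    (R' : V → V → ℝ) (hR' : IsResistance (addEdge w a b u) R')
    (i j : V) :
    R' i j ≤ R i j := by
  rcases eq_or_ne i j with rfl | hij
  · rw [hR.1, hR'.1]
  · obtain ⟨φ, hφ, hRφ⟩ := hR.2 i j hij
    obtain ⟨ψ, hψ, hRψ⟩ := hR'.2 i j hij
    rw [hRφ, hRψ]
    exact hφ.drop_antitone hw.1 (addEdge_symm hw.1 a b u) hw.2.1 (le_addEdge w a b hu.le) hij hψ
end
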